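/- Let (A,·,{·,·},α) be a transposed Hom-Poisson algebra and (s,ρ,β,V) a representation of it. Then the direct sum A ⊕ V with product (x₁+v₁)·'(x₂+v₂) = x₁·x₂ + s(x₁)v₂ + s(x₂)v₁, bracket {x₁+v₁, x₂+v₂}' = {x₁,x₂} + ρ(x₁)v₂ − ρ(x₂)v₁, and linear map (α⊕β)(x+v) = α(x)+β(v) is a transposed Hom-Poisson algebra. -/

import Mathlib

/-!
The subspace `V` of `A × V` is an ideal on which both operations vanish, so each identity to be
checked on `A × V` splits into the same identity in `A` and an identity in `V`, every term of which
contains exactly one argument from `V`. Placing that argument in each of the slots in turn yields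
the conditions on a representation. The first two slots of Hom-associativity also use
`s (α x) ∘ s y = s (α y) ∘ s x`, which comes from the commutativity of `A`.
-/

section Semidirect

variable {R A V : Type*} [CommSemiring R] [AddCommGroup A] [Module R A]
  [AddCommGroup V] [Module R V]

/-- Commutative Hom-associative algebras `(A, ·, α)`. -/
structure IsCommHomAssoc (mul : A →ₗ[R] A →ₗ[R] A) (α : A →ₗ[R] A) : Prop where
  comm (x y : A) : mul x y = mul y x
  assoc (x y z : A) : mul (mul x y) (α z) = mul (α x) (mul y z)

/-- Hom-Lie algebras `(A, {·,·}, α)`; as in the paper, `α` need not preserve the bracket. -/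
structure IsHomLie (br : A →ₗ[R] A →ₗ[R] A) (α : A →ₗ[R] A) : Prop where
  skew (x y : A) : br x y = -br y x
  jacobi (x y z : A) : br (α x) (br y z) + br (α y) (br z x) + br (α z) (br x y) = 0

/-- Transposed Hom-Poisson algebras `(A, ·, {·,·}, α)`. -/
structure IsTransposedHomPoisson (mul br : A →ₗ[R] A →ₗ[R] A) (α : A →ₗ[R] A) : Prop
    extends IsCommHomAssoc mul α, IsHomLie br α where
  leibniz (x y z : A) : (2 : R) • mul (α z) (br x y) = br (mul z x) (α y) + br (α x) (mul z y)

/-- Modules `(s, β, V)` over a Hom-associative algebra `(A, ·, α)`, without the condition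
`β ∘ s x = s (α x) ∘ β` which the paper adds. -/
def IsHomModule (mul : A →ₗ[R] A →ₗ[R] A) (α : A →ₗ[R] A)
    (s : A →ₗ[R] V →ₗ[R] V) (β : V →ₗ[R] V) : Prop :=
  ∀ x y v, s (mul x y) (β v) = s (α x) (s y v)

/-- Modules `(ρ, β, V)` over a Hom-Lie algebra `(A, {·,·}, α)`, without the condition
`β ∘ ρ x = ρ (α x) ∘ β` which the paper adds. -/
def IsHomLieModule (br : A →ₗ[R] A →ₗ[R] A) (α : A →ₗ[R] A)
    (ρ : A →ₗ[R] V →ₗ[R] V) (β : V →ₗ[R] V) : Prop :=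
  ∀ x y v, ρ (br x y) (β v) = ρ (α x) (ρ y v) - ρ (α y) (ρ x v)

/-- The compatibility of the two actions `s` and `ρ` in a representation of a transposed
Hom-Poisson algebra: the transposed Leibniz rule with one argument taken from `V`. -/
structure IsTransposedLeibnizPair (mul br : A →ₗ[R] A →ₗ[R] A) (α : A →ₗ[R] A)
    (s ρ : A →ₗ[R] V →ₗ[R] V) (β : V →ₗ[R] V) : Prop where
  two_smul_bracket (x y : A) (v : V) :
    (2 : R) • s (br x y) (β v) = ρ (α x) (s y v) - ρ (α y) (s x v)
  two_smul_action (x y : A) (v : V) :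
    (2 : R) • s (α x) (ρ y v) = ρ (mul x y) (β v) + ρ (α y) (s x v)

/-- The bilinear operation `(x, a) * (y, b) = (m x y, l x b + r y a)` on `A × V` that extends `m` by
a left action `l` and a right action `r`. The product on `A ⊕ V` is the case `l = r = s`, the
bracket the case `l = ρ`, `r = -ρ`. -/
def semidirect (m : A →ₗ[R] A →ₗ[R] A) (l r : A →ₗ[R] V →ₗ[R] V) :
    A × V →ₗ[R] A × V →ₗ[R] A × V :=
  LinearMap.mk₂ R (fun u w ↦ (m u.1 w.1, l u.1 w.2 + r w.1 u.2))
    (fun _ _ _ ↦ by ext <;> simp; abel) (fun _ _ _ ↦ by ext <;> simp)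
    (fun _ _ _ ↦ by ext <;> simp; abel) (fun _ _ _ ↦ by ext <;> simp)

variable {mul br : A →ₗ[R] A →ₗ[R] A} {α : A →ₗ[R] A} {s ρ : A →ₗ[R] V →ₗ[R] V} {β : V →ₗ[R] V}

theorem semidirect_apply (m : A →ₗ[R] A →ₗ[R] A) (l r : A →ₗ[R] V →ₗ[R] V) (u w : A × V) :
    semidirect m l r u w = (m u.1 w.1, l u.1 w.2 + r w.1 u.2) :=
  rfl

theorem semidirect_neg_apply (m : A →ₗ[R] A →ₗ[R] A) (l : A →ₗ[R] V →ₗ[R] V) (u w : A × V) :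
    semidirect m l (-l) u w = (m u.1 w.1, l u.1 w.2 - l w.1 u.2) := by
  simp only [semidirect_apply, LinearMap.neg_apply, sub_eq_add_neg]

theorem IsHomModule.action_left_comm (hs : IsHomModule mul α s β)
    (hcomm : ∀ x y, mul x y = mul y x) (x y : A) (v : V) :
    s (α x) (s y v) = s (α y) (s x v) := by
  rw [← hs, hcomm, hs]

theorem IsCommHomAssoc.semidirect (hA : IsCommHomAssoc mul α) (hs : IsHomModule mul α s β) :
    IsCommHomAssoc (semidirect mul s s) (α.prodMap β) where
  comm u w := Prod.ext (hA.comm u.1 w.1) (add_comm _ _)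
  assoc := by
    rintro ⟨x, a⟩ ⟨y, b⟩ ⟨z, c⟩
    refine Prod.ext (hA.assoc x y z) ?_
    calc
      s (mul x y) (β c) + s (α z) (s x b + s y a)
        = s (α x) (s y c) + (s (α x) (s z b) + s (α y) (s z a)) := by
          rw [hs, map_add, hs.action_left_comm hA.comm z x, hs.action_left_comm hA.comm z y]
      _ = s (α x) (s y c + s z b) + s (mul y z) (β a) := by
          rw [hs, map_add, add_assoc]

theorem IsHomLie.semidirect (hA : IsHomLie br α) (hρ : IsHomLieModule br α ρ β) :
    IsHomLie (semidirect br ρ (-ρ)) (α.prodMap β) where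
  skew u w := by
    simp only [semidirect_neg_apply, Prod.neg_mk, neg_sub, ← hA.skew]
  jacobi := by
    rintro ⟨x, a⟩ ⟨y, b⟩ ⟨z, c⟩
    simp only [semidirect_neg_apply, LinearMap.prodMap_apply]
    refine Prod.ext (hA.jacobi x y z) ?_
    change ρ (α x) (ρ y c - ρ z b) - ρ (br y z) (β a)
      + (ρ (α y) (ρ z a - ρ x c) - ρ (br z x) (β b))
      + (ρ (α z) (ρ x b - ρ y a) - ρ (br x y) (β c)) = 0
    simp only [hρ _ _ _, map_sub]
    abel

theorem IsTransposedLeibnizPair.semidirect_leibniz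
    (hsρ : IsTransposedLeibnizPair mul br α s ρ β)
    (hleib : ∀ x y z,
      (2 : R) • mul (α z) (br x y) = br (mul z x) (α y) + br (α x) (mul z y))
    (u w t : A × V) :
    (2 : R) • semidirect mul s s (α.prodMap β t) (semidirect br ρ (-ρ) u w)
      = semidirect br ρ (-ρ) (semidirect mul s s t u) (α.prodMap β w)
        + semidirect br ρ (-ρ) (α.prodMap β u) (semidirect mul s s t w) := by
  obtain ⟨x, a⟩ := u
  obtain ⟨y, b⟩ := w
  obtain ⟨z, c⟩ := t
  simp only [semidirect_neg_apply]
  simp only [semidirect_apply, LinearMap.prodMap_apply]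
  refine Prod.ext (hleib x y z) ?_
  change (2 : R) • (s (α z) (ρ x b - ρ y a) + s (br x y) (β c))
    = ρ (mul z x) (β b) - ρ (α y) (s z a + s x c)
      + (ρ (α x) (s z b + s y c) - ρ (mul z y) (β a))
  simp only [map_sub, map_add, smul_add, smul_sub, hsρ.two_smul_bracket, hsρ.two_smul_action]
  abel

theorem semidirect_transposedHomPoisson_general (hA : IsTransposedHomPoisson mul br α)
    (hs : IsHomModule mul α s β) (hρ : IsHomLieModule br α ρ β)
    (hsρ : IsTransposedLeibnizPair mul br α s ρ β) :
    IsTransposedHomPoisson (semidirect mul s s) (semidirect br ρ (-ρ)) (α.prodMap β) where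
  toIsCommHomAssoc := hA.toIsCommHomAssoc.semidirect hs
  toIsHomLie := hA.toIsHomLie.semidirect hρ
  leibniz := hsρ.semidirect_leibniz hA.leibniz

end Semidirect

/-- The semidirect sum of a transposed Hom-Poisson algebra with a
representation is a transposed Hom-Poisson algebra. -/
theorem semidirect_transposedHomPoisson
    {K A V : Type*} [Field K] [CharZero K]
    [AddCommGroup A] [Module K A] [AddCommGroup V] [Module K V]
    -- transposed Hom-Poisson algebra (A, mul, br, α)
    (mul : A →ₗ[K] A →ₗ[K] A) (br : A →ₗ[K] A →ₗ[K] A) (α : A →ₗ[K] A)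
    (hcomm : ∀ x y : A, mul x y = mul y x)
    (hassoc : ∀ x y z : A, mul (mul x y) (α z) = mul (α x) (mul y z))
    (hskew : ∀ x y : A, br x y = - br y x)
    (hjac : ∀ x y z : A, br (α x) (br y z) + br (α y) (br z x) + br (α z) (br x y) = 0)
    (hleib : ∀ x y z : A,
      (2 : K) • mul (α z) (br x y) = br (mul z x) (α y) + br (α x) (mul z y))
    -- representation (s, ρ, β, V)
    (s ρ : A →ₗ[K] V →ₗ[K] V) (β : V →ₗ[K] V)
    (hs1 : ∀ (x y : A) (v : V), s (mul x y) (β v) = s (α x) (s y v))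
    (hs2 : ∀ (x : A) (v : V), β (s x v) = s (α x) (β v))
    (hρ1 : ∀ (x y : A) (v : V), ρ (br x y) (β v) = ρ (α x) (ρ y v) - ρ (α y) (ρ x v))
    (hρ2 : ∀ (x : A) (v : V), β (ρ x v) = ρ (α x) (β v))
    (hc1 : ∀ (x y : A) (v : V),
      (2 : K) • s (br x y) (β v) = ρ (α x) (s y v) - ρ (α y) (s x v))
    (hc2 : ∀ (x y : A) (v : V),
      (2 : K) • s (α x) (ρ y v) = ρ (mul x y) (β v) + ρ (α y) (s x v))
    -- operations on the direct sum A × V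
    (mul' br' : (A × V) → (A × V) → (A × V)) (αβ : (A × V) → (A × V))
    (hmul' : ∀ u w : A × V, mul' u w = (mul u.1 w.1, s u.1 w.2 + s w.1 u.2))
    (hbr' : ∀ u w : A × V, br' u w = (br u.1 w.1, ρ u.1 w.2 - ρ w.1 u.2))
    (hαβ : ∀ u : A × V, αβ u = (α u.1, β u.2)) :
    (∀ u w : A × V, mul' u w = mul' w u) ∧
    (∀ u w t : A × V, mul' (mul' u w) (αβ t) = mul' (αβ u) (mul' w t)) ∧
    (∀ u w : A × V, br' u w = - br' w u) ∧
    (∀ u w t : A × V,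
      br' (αβ u) (br' w t) + br' (αβ w) (br' t u) + br' (αβ t) (br' u w) = 0) ∧
    (∀ u w t : A × V,
      (2 : K) • mul' (αβ t) (br' u w) = br' (mul' t u) (αβ w) + br' (αβ u) (mul' t w)) := by
  obtain rfl : mul' = fun u w ↦ semidirect mul s s u w := funext₂ hmul'
  obtain rfl : br' = fun u w ↦ semidirect br ρ (-ρ) u w :=
    funext₂ fun u w ↦ (hbr' u w).trans (semidirect_neg_apply br ρ u w).symm
  obtain rfl : αβ = α.prodMap β := funext hαβ
  have hAV := semidirect_transposedHomPoisson_general ⟨⟨hcomm, hassoc⟩, ⟨hskew, hjac⟩, hleib⟩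
    hs1 hρ1 ⟨hc1, hc2⟩
  exact ⟨hAV.comm, hAV.assoc, hAV.skew, hAV.jacobi, hAV.leibniz⟩
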